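/- For λ∈ba(𝒜), the set ba₀(λ) contains a nonzero element if and only if λ is not strongly continuous. -/

import Mathlib

open Set Filter Topology

namespace FA

/-- An algebra of subsets of `Ω`. -/
structure SetAlg (Ω : Type*) where
  sets : Set (Set Ω)
  empty_mem : ∅ ∈ sets
  compl_mem : ∀ ⦃A⦄, A ∈ sets → Aᶜ ∈ sets
  union_mem : ∀ ⦃A B⦄, A ∈ sets → B ∈ sets → A ∪ B ∈ sets

/-- A bounded, finitely additive real-valued set function on the algebra `𝒜`,
i.e. an element of `ba(𝒜)`. -/
structure BAMeasure {Ω : Type*} (𝒜 : SetAlg Ω) where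
  toFun : Set Ω → ℝ
  map_empty : toFun ∅ = 0
  additive : ∀ ⦃A B : Set Ω⦄, A ∈ 𝒜.sets → B ∈ 𝒜.sets → Disjoint A B →
      toFun (A ∪ B) = toFun A + toFun B
  bounded : ∃ M : ℝ, ∀ A ∈ 𝒜.sets, |toFun A| ≤ M

variable {Ω : Type*} {𝒜 : SetAlg Ω}

/-- Total variation `|λ|(A) = λ⁺(A) + λ⁻(A)`. -/
noncomputable def var (lam : BAMeasure 𝒜) (A : Set Ω) : ℝ :=
  sSup {x | ∃ B ∈ 𝒜.sets, B ⊆ A ∧ x = lam.toFun B} +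
  sSup {x | ∃ B ∈ 𝒜.sets, B ⊆ A ∧ x = -lam.toFun B}

/-- The outer measure `|λ|*(B) = inf {|λ|(A) : A ∈ 𝒜, B ⊆ A}`. -/
noncomputable def outer (lam : BAMeasure 𝒜) (B : Set Ω) : ℝ :=
  sInf {x | ∃ A ∈ 𝒜.sets, B ⊆ A ∧ x = var lam A}

/-- `𝒜`-simple functions. -/
def IsSimple (𝒜 : SetAlg Ω) (f : Ω → ℝ) : Prop :=
  (Set.range f).Finite ∧ ∀ r : ℝ, f ⁻¹' {r} ∈ 𝒜.sets

/-- `λ`-convergence: `(f n)` converges to `g` in `λ`-measure. -/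
def LConv (lam : BAMeasure 𝒜) (f : ℕ → Ω → ℝ) (g : Ω → ℝ) : Prop :=
  ∀ c > (0:ℝ), Tendsto (fun n => outer lam {ω | c < |f n ω - g ω|}) atTop (𝓝 0)

/-- `λ`-Cauchy sequences. -/
def LCauchy (lam : BAMeasure 𝒜) (f : ℕ → Ω → ℝ) : Prop :=
  ∀ c > (0:ℝ), ∀ ε > (0:ℝ), ∃ N : ℕ, ∀ p q : ℕ,
    outer lam {ω | c < |f (N + p) ω - f (N + q) ω|} < ε

/-- `L⁰(λ)`: `λ`-limits of sequences of `𝒜`-simple functions. -/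
def L0 (lam : BAMeasure 𝒜) : Set (Ω → ℝ) :=
  {f | ∃ s : ℕ → Ω → ℝ, (∀ n, IsSimple 𝒜 (s n)) ∧ LConv lam s f}

/-- The metric of `L⁰(λ)`: `d(f,g) = inf {c + |λ|*(|f-g| ≥ c) : c > 0}`. -/
noncomputable def dL0 (lam : BAMeasure 𝒜) (f g : Ω → ℝ) : ℝ :=
  sInf {x | ∃ c > (0:ℝ), x = c + outer lam {ω | c ≤ |f ω - g ω|}}

/-- A set `K` is bounded in `L⁰(λ)` if `lim_{c→∞} sup_{f∈K} |λ|*(|f|>c) = 0`. -/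
def BddL0 (lam : BAMeasure 𝒜) (K : Set (Ω → ℝ)) : Prop :=
  ∀ ε > (0:ℝ), ∃ c₀ : ℝ, ∀ c ≥ c₀, ∀ f ∈ K, outer lam {ω | c < |f ω|} < ε

/-- The nonnegative elements of `L⁰(λ)`. -/
def L0pos (lam : BAMeasure 𝒜) : Set (Ω → ℝ) := {f ∈ L0 lam | ∀ ω, 0 ≤ f ω}

/-- The elementary integral of a simple function with respect to a set function. -/
noncomputable def simpleIntegral (m : Set Ω → ℝ) (f : Ω → ℝ) : ℝ :=
  ∑ᶠ r : ℝ, r * m (f ⁻¹' {r})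

/-- Dunford–Schwartz integrability: there is a sequence of simple functions converging to `f`
in `λ`-measure which is Cauchy in mean. -/
def MemL1 (lam : BAMeasure 𝒜) (f : Ω → ℝ) : Prop :=
  ∃ s : ℕ → Ω → ℝ, (∀ n, IsSimple 𝒜 (s n)) ∧ LConv lam s f ∧
    ∀ ε > (0:ℝ), ∃ N : ℕ, ∀ m ≥ N, ∀ n ≥ N,
      simpleIntegral (var lam) (fun ω => |s m ω - s n ω|) < ε

/-- `L¹(λ)`. -/
def L1 (lam : BAMeasure 𝒜) : Set (Ω → ℝ) := {f | MemL1 lam f}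

open scoped Classical in
/-- The Dunford–Schwartz integral `∫ f dλ`. -/
noncomputable def integral (lam : BAMeasure 𝒜) (f : Ω → ℝ) : ℝ :=
  if h : MemL1 lam f then
    limUnder atTop (fun n => simpleIntegral lam.toFun (h.choose n))
  else 0

open scoped Classical in
/-- The `L¹(λ)` seminorm `∫ |f| d|λ|`. -/
noncomputable def l1Norm (lam : BAMeasure 𝒜) (f : Ω → ℝ) : ℝ :=
  if h : MemL1 lam f then
    limUnder atTop (fun n => simpleIntegral (var lam) (fun ω => |h.choose n ω|))
  else 0

/-- A set is bounded in `L¹(μ)` if the integrals `∫|f| d|μ|` are uniformly bounded. -/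
def BddL1 (mu : BAMeasure 𝒜) (K : Set (Ω → ℝ)) : Prop :=
  ∃ M : ℝ, ∀ f ∈ K, l1Norm mu f ≤ M

/-- Finitely additive probability measures. -/
def IsFAProb (mu : BAMeasure 𝒜) : Prop :=
  mu.toFun Set.univ = 1 ∧ ∀ A ∈ 𝒜.sets, 0 ≤ mu.toFun A

/-- `μ ∈ 𝔓_*(λ)`: a finitely additive probability with `|μ| ≤ c |λ|` and the same null
sets as `λ`. -/
def PStar (lam mu : BAMeasure 𝒜) : Prop :=
  IsFAProb mu ∧ (∃ c : ℝ, 0 ≤ c ∧ ∀ A ∈ 𝒜.sets, var mu A ≤ c * var lam A) ∧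
  ∀ A ∈ 𝒜.sets, (mu.toFun A = 0 ↔ var lam A = 0)

/-- `μ ∈ 𝔓_*(λ; K)`. -/
def PStarWith (lam : BAMeasure 𝒜) (K : Set (Ω → ℝ)) (mu : BAMeasure 𝒜) : Prop :=
  PStar lam mu ∧ K ⊆ L1 mu ∧ BddL1 mu K

/-- `f` is a `λ`-a.s. lower bound of `K`. -/
def ASLowerBound (lam : BAMeasure 𝒜) (f : Ω → ℝ) (K : Set (Ω → ℝ)) : Prop :=
  ∀ c > (0:ℝ), ∀ k ∈ K, outer lam {ω | k ω < f ω - c} = 0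

/-- Absolute continuity `μ ≪ λ` for bounded finitely additive set functions. -/
def AbsCont (mu lam : BAMeasure 𝒜) : Prop :=
  ∀ ε > (0:ℝ), ∃ δ > (0:ℝ), ∀ A ∈ 𝒜.sets, var lam A < δ → var mu A < ε

/-- `λ ∈ ba₀(𝒜)`: the range of `λ` is finite. -/
def FiniteRange (lam : BAMeasure 𝒜) : Prop := (lam.toFun '' 𝒜.sets).Finite

/-- `μ ∈ ba₀(λ)`. -/
def BA0rel (lam mu : BAMeasure 𝒜) : Prop := FiniteRange mu ∧ AbsCont mu lam

/-- Strong continuity: arbitrarily fine finite partitions. -/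
def StronglyContinuous (lam : BAMeasure 𝒜) : Prop :=
  ∀ ε > (0:ℝ), ∃ (N : ℕ) (A : Fin N → Set Ω), (∀ n, A n ∈ 𝒜.sets) ∧
    Pairwise (Function.onFun Disjoint A) ∧ (⋃ n, A n) = Set.univ ∧
    ∀ n, var lam (A n) < ε

/-- Orthogonality of bounded finitely additive set functions. -/
def Orthogonal (mu nu : BAMeasure 𝒜) : Prop :=
  ∀ ε > (0:ℝ), ∃ A ∈ 𝒜.sets, var mu A < ε ∧ var nu Aᶜ < ε

/-- Strong discontinuity: orthogonal to every strongly continuous element of `ba(𝒜)`. -/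
def StronglyDiscontinuous (mu : BAMeasure 𝒜) : Prop :=
  ∀ nu : BAMeasure 𝒜, StronglyContinuous nu → Orthogonal mu nu

/-- Countable additivity of `λ` on the algebra `𝒜`. -/
def CountablyAdditive (lam : BAMeasure 𝒜) : Prop :=
  ∀ A : ℕ → Set Ω, (∀ n, A n ∈ 𝒜.sets) → Pairwise (Function.onFun Disjoint A) →
    (⋃ n, A n) ∈ 𝒜.sets → HasSum (fun n => lam.toFun (A n)) (lam.toFun (⋃ n, A n))

/-- `𝒜` is a σ-algebra. -/
def IsSigmaAlg (𝒜 : SetAlg Ω) : Prop :=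
  ∀ A : ℕ → Set Ω, (∀ n, A n ∈ 𝒜.sets) → (⋃ n, A n) ∈ 𝒜.sets

/-- Linearity of a functional on `L⁰(λ)`. -/
def LinearOnL0 (lam : BAMeasure 𝒜) (φ : (Ω → ℝ) → ℝ) : Prop :=
  (∀ f ∈ L0 lam, ∀ g ∈ L0 lam, φ (f + g) = φ f + φ g) ∧
  (∀ a : ℝ, ∀ f ∈ L0 lam, φ (a • f) = a * φ f)

/-- Continuity of a functional on `L⁰(λ)` with respect to the metric `d`. -/
def ContinuousOnL0 (lam : BAMeasure 𝒜) (φ : (Ω → ℝ) → ℝ) : Prop :=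
  ∀ f ∈ L0 lam, ∀ ε > (0:ℝ), ∃ δ > (0:ℝ), ∀ g ∈ L0 lam, dL0 lam g f < δ → |φ g - φ f| < ε


theorem SetAlg.inter_mem (𝒜 : SetAlg Ω) {A B : Set Ω} (hA : A ∈ 𝒜.sets) (hB : B ∈ 𝒜.sets) :
    A ∩ B ∈ 𝒜.sets := by
  have h := 𝒜.compl_mem (𝒜.union_mem (𝒜.compl_mem hA) (𝒜.compl_mem hB))
  rwa [Set.compl_union, compl_compl, compl_compl] at h

theorem SetAlg.diff_mem (𝒜 : SetAlg Ω) {A B : Set Ω} (hA : A ∈ 𝒜.sets) (hB : B ∈ 𝒜.sets) :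
    A \ B ∈ 𝒜.sets := by
  rw [Set.sdiff_eq]; exact 𝒜.inter_mem hA (𝒜.compl_mem hB)

theorem SetAlg.biUnion_mem (𝒜 : SetAlg Ω) {ι : Type*} (f : ι → Set Ω) (s : Finset ι)
    (h : ∀ i ∈ s, f i ∈ 𝒜.sets) : (⋃ i ∈ s, f i) ∈ 𝒜.sets := by
  classical
  induction s using Finset.induction_on with
  | empty => simpa using 𝒜.empty_mem
  | insert a s ha ih =>
    rw [Finset.set_biUnion_insert]
    exact 𝒜.union_mem (h a (by simp)) (ih fun i hi => h i (by simp [hi]))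

theorem bdd_pos (mu : BAMeasure 𝒜) (A : Set Ω) :
    BddAbove {x | ∃ B ∈ 𝒜.sets, B ⊆ A ∧ x = mu.toFun B} := by
  obtain ⟨M, hM⟩ := mu.bounded
  refine ⟨M, ?_⟩
  rintro x ⟨B, hB, -, rfl⟩
  exact (le_abs_self _).trans (hM B hB)

theorem bdd_neg (mu : BAMeasure 𝒜) (A : Set Ω) :
    BddAbove {x | ∃ B ∈ 𝒜.sets, B ⊆ A ∧ x = -mu.toFun B} := by
  obtain ⟨M, hM⟩ := mu.bounded
  refine ⟨M, ?_⟩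
  rintro x ⟨B, hB, -, rfl⟩
  exact (neg_le_abs _).trans (hM B hB)

theorem var_mono (mu : BAMeasure 𝒜) {A A' : Set Ω} (h : A ⊆ A') : var mu A ≤ var mu A' := by
  unfold var
  apply add_le_add
  · refine csSup_le_csSup (bdd_pos mu A') ⟨_, ∅, 𝒜.empty_mem, Set.empty_subset _, rfl⟩ ?_
    rintro x ⟨B, hB, hBA, rfl⟩
    exact ⟨B, hB, hBA.trans h, rfl⟩
  · refine csSup_le_csSup (bdd_neg mu A') ⟨_, ∅, 𝒜.empty_mem, Set.empty_subset _, rfl⟩ ?_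
    rintro x ⟨B, hB, hBA, rfl⟩
    exact ⟨B, hB, hBA.trans h, rfl⟩

theorem abs_le_var (mu : BAMeasure 𝒜) {A B : Set Ω} (hB : B ∈ 𝒜.sets) (h : B ⊆ A) :
    |mu.toFun B| ≤ var mu A := by
  unfold var
  have h1 := le_csSup (bdd_pos mu A) ⟨B, hB, h, rfl⟩
  have h2 := le_csSup (bdd_neg mu A) ⟨B, hB, h, rfl⟩
  have h3 := le_csSup (bdd_pos mu A) ⟨∅, 𝒜.empty_mem, Set.empty_subset _, rfl⟩
  have h4 := le_csSup (bdd_neg mu A) ⟨∅, 𝒜.empty_mem, Set.empty_subset _, rfl⟩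
  rw [mu.map_empty] at h3 h4
  rw [abs_le]
  constructor <;> linarith

theorem var_eq_zero (mu : BAMeasure 𝒜) {A : Set Ω}
    (h : ∀ B ∈ 𝒜.sets, B ⊆ A → mu.toFun B = 0) : var mu A = 0 := by
  have e1 : {x | ∃ B ∈ 𝒜.sets, B ⊆ A ∧ x = mu.toFun B} = {0} := by
    ext x
    constructor
    · rintro ⟨B, hB, hBA, rfl⟩
      exact h B hB hBA
    · rintro rfl
      exact ⟨∅, 𝒜.empty_mem, Set.empty_subset _, mu.map_empty.symm⟩
  have e2 : {x | ∃ B ∈ 𝒜.sets, B ⊆ A ∧ x = -mu.toFun B} = {0} := by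
    ext x
    constructor
    · rintro ⟨B, hB, hBA, rfl⟩
      simp [h B hB hBA]
    · rintro rfl
      exact ⟨∅, 𝒜.empty_mem, Set.empty_subset _, by simp [mu.map_empty]⟩
  unfold var
  rw [e1, e2]; simp

/-- A set function vanishing on disjoint pieces vanishes on their union. -/
theorem biUnion_zero (mu : BAMeasure 𝒜) {ι : Type*} (f : ι → Set Ω) (s : Finset ι)
    (hf : ∀ i, f i ∈ 𝒜.sets) (hd : Pairwise (Function.onFun Disjoint f))
    (h0 : ∀ i, mu.toFun (f i) = 0) : mu.toFun (⋃ i ∈ s, f i) = 0 := by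
  classical
  induction s using Finset.induction_on with
  | empty => simpa using mu.map_empty
  | insert a s ha ih =>
    rw [Finset.set_biUnion_insert, mu.additive (hf a) (𝒜.biUnion_mem f s fun i _ => hf i), h0, ih,
      add_zero]
    rw [Set.disjoint_iUnion₂_right]
    intro i hi
    exact hd (fun e => ha (e ▸ hi))

/-- Two-valued set function of an ultrafilter. -/
theorem exists_ultra (U : Ultrafilter Ω) (𝒜 : SetAlg Ω) : ∃ mu : BAMeasure 𝒜,
    (∀ A, A ∈ U → mu.toFun A = 1) ∧ (∀ A, A ∉ U → mu.toFun A = 0) := by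
  classical
  refine ⟨⟨fun A => if A ∈ U then 1 else 0, ?_, ?_, 1, ?_⟩, ?_, ?_⟩
  · exact if_neg U.empty_notMem
  · intro A B _ _ hd
    by_cases hA : A ∈ U <;> by_cases hB : B ∈ U
    · exfalso
      have := U.inter_mem hA hB
      rw [hd.inter_eq] at this
      exact U.empty_notMem this
    all_goals simp [hA, hB, Ultrafilter.union_mem_iff]
  · intro A _
    split_ifs <;> simp
  · intro A h; exact if_pos h
  · intro A h; exact if_neg h

/-- A finite cover by sets of small variation can be made disjoint. -/
theorem exists_partition (lam : BAMeasure 𝒜) (ε : ℝ) (t : Set (Set Ω)) (ht : t.Finite)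
    (h : ∀ A ∈ t, A ∈ 𝒜.sets ∧ var lam A < ε) (hc : ⋃₀ t = Set.univ) :
    ∃ (N : ℕ) (A : Fin N → Set Ω), (∀ n, A n ∈ 𝒜.sets) ∧
    Pairwise (Function.onFun Disjoint A) ∧ (⋃ n, A n) = Set.univ ∧
    ∀ n, var lam (A n) < ε := by
  classical
  have : Finite t := ht
  obtain ⟨N, ⟨e⟩⟩ := Finite.exists_equiv_fin t
  let f : Fin N → Set Ω := fun i => (e.symm i : Set Ω)
  have hf : ∀ i, f i ∈ t := fun i => (e.symm i).2
  let g : Fin N → Set Ω := fun i => f i \ ⋃ j ∈ Finset.univ.filter (fun j => j < i), f j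
  refine ⟨N, g, fun n => ?_, ?_, ?_, fun n => ?_⟩
  · exact 𝒜.diff_mem (h _ (hf n)).1 (𝒜.biUnion_mem f _ fun i _ => (h _ (hf i)).1)
  · have key : ∀ i j, i < j → Disjoint (g i) (g j) := by
      intro i j hij
      rw [Set.disjoint_left]
      rintro x ⟨hx, -⟩ ⟨-, hx'⟩
      exact hx' (by simp only [Set.mem_iUnion]; exact ⟨i, by simpa using hij, hx⟩)
    intro i j hij
    rcases lt_or_gt_of_ne hij with h1 | h1
    · exact key i j h1
    · exact (key j i h1).symm
  · rw [Set.eq_univ_iff_forall]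
    intro x
    have hx : x ∈ ⋃₀ t := by rw [hc]; trivial
    obtain ⟨A, hA, hxA⟩ := hx
    have hne : (Finset.univ.filter (fun i => x ∈ f i)).Nonempty :=
      ⟨e ⟨A, hA⟩, by simpa [f] using hxA⟩
    have hm := Finset.min'_mem _ hne
    refine Set.mem_iUnion.2 ⟨Finset.min' _ hne, (Finset.mem_filter.1 hm).2, ?_⟩
    intro hx
    simp only [Set.mem_iUnion] at hx
    obtain ⟨j, hj, hxj⟩ := hx
    have h1 := (Finset.mem_filter.1 hj).2
    exact absurd (Finset.min'_le _ j (by simpa using hxj)) (not_le.2 h1)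
  · exact (var_mono lam Set.sdiff_subset).trans_lt (h _ (hf n)).2

/-- Theorem 7: `ba₀(λ)` contains a nonzero element if and only if `λ` is not strongly
continuous. -/
theorem stmt_4 {Ω : Type*} {𝒜 : SetAlg Ω} (lam : BAMeasure 𝒜) :
    (∃ mu : BAMeasure 𝒜, BA0rel lam mu ∧ ∃ A ∈ 𝒜.sets, mu.toFun A ≠ 0) ↔
    ¬ StronglyContinuous lam := by
  constructor
  · rintro ⟨mu, ⟨hfin, hac⟩, B, hB, hne⟩ hsc
    -- a positive lower bound for the nonzero values
    obtain ⟨ε, hε, hlow⟩ : ∃ ε > (0:ℝ), ∀ A ∈ 𝒜.sets, |mu.toFun A| < ε → mu.toFun A = 0 := by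
      have hfin' : ((mu.toFun '' 𝒜.sets) \ {0}).Finite := hfin.subset Set.sdiff_subset
      obtain ⟨y, ⟨⟨C, hC, rfl⟩, hy0⟩, hmin⟩ :=
        Set.exists_min_image _ (fun x : ℝ => |x|) hfin' ⟨mu.toFun B, ⟨B, hB, rfl⟩, hne⟩
      refine ⟨|mu.toFun C|, abs_pos.2 hy0, fun A hA hlt => ?_⟩
      by_contra h
      exact absurd (hmin _ ⟨⟨A, hA, rfl⟩, h⟩) (not_le.2 hlt)
    obtain ⟨δ, hδ, hd⟩ := hac ε hε
    obtain ⟨N, A, hA, hdis, hun, hsmall⟩ := hsc δ hδ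
    apply hne
    have h := biUnion_zero mu (fun n => B ∩ A n) Finset.univ (fun n => 𝒜.inter_mem hB (hA n))
      (fun i j hij => (hdis hij).mono Set.inter_subset_right Set.inter_subset_right)
      (fun n => hlow _ (𝒜.inter_mem hB (hA n))
        ((abs_le_var mu (𝒜.inter_mem hB (hA n)) Set.inter_subset_right).trans_lt
          (hd _ (hA n) (hsmall n))))
    have e : (⋃ i ∈ (Finset.univ : Finset (Fin N)), B ∩ A i) = B := by
      simp [← Set.inter_iUnion, hun]
    rwa [e] at h
  · intro hn
    unfold StronglyContinuous at hn
    push Not at hn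
    obtain ⟨ε, hε, hn⟩ := hn
    have hne : (Filter.generate {C : Set Ω | Cᶜ ∈ 𝒜.sets ∧ var lam Cᶜ < ε}).NeBot := by
      rw [Filter.generate_neBot_iff]
      intro t ht htf
      by_contra hemp
      rw [Set.not_nonempty_iff_eq_empty] at hemp
      obtain ⟨N, A, h1, h2, h3, h4⟩ := exists_partition lam ε (compl '' t) (htf.image _)
        (by rintro _ ⟨C, hC, rfl⟩; exact ht hC)
        (by rw [← Set.compl_sInter, hemp, Set.compl_empty])
      obtain ⟨n, hn⟩ := hn N A h1 h2 h3
      exact absurd (h4 n) (not_lt.2 hn)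
    let U := Ultrafilter.of (Filter.generate {C : Set Ω | Cᶜ ∈ 𝒜.sets ∧ var lam Cᶜ < ε})
    have hU : ∀ A ∈ 𝒜.sets, var lam A < ε → A ∉ U := by
      intro A hA hv
      rw [← Ultrafilter.compl_mem_iff_notMem]
      apply Ultrafilter.of_le
      apply Filter.mem_generate_of_mem
      simpa using ⟨hA, hv⟩
    obtain ⟨mu, hm1, hm0⟩ := exists_ultra U 𝒜
    refine ⟨mu, ⟨?_, ?_⟩, Set.univ, ?_, ?_⟩
    · apply (Set.toFinite ({0, 1} : Set ℝ)).subset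
      rintro _ ⟨A, -, rfl⟩
      by_cases h : A ∈ U
      · simp [hm1 A h]
      · simp [hm0 A h]
    · intro η hη
      refine ⟨ε, hε, fun A hA hv => ?_⟩
      rw [var_eq_zero mu]
      · exact hη
      · intro B hB hBA
        exact hm0 B (hU B hB ((var_mono lam hBA).trans_lt hv))
    · simpa using 𝒜.compl_mem 𝒜.empty_mem
    · rw [hm1 _ Filter.univ_mem]; exact one_ne_zero

end FA
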